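/- arXiv:2009.03549 — 2 statements merged into one kernel-verified Lean document; each statement's English description precedes it below -/
import Mathlib

section
/- Let r > 0, let α ∈ (−r, r), let β ∈ (α, r), let q ∈ [1,∞], let s ∈ (0,1], and let f : (0,1] → ℝ be measurable. Then ‖ u ↦ u^{−α} ∫₀^s (tu/(t+u)²)^r |f(t)| dt/t ‖_{L^q((0,1], du/u)} ≤ (2r/(r² − α²)) · s^{β−α} · ‖ u ↦ u^{−β} f(u) ‖_{L^q((0,1], du/u)}. -/
/-!
For `0 < t ≤ s` one has `1 ≤ (s / t) ^ (β - α)`. Inserting this factor and writing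
`|f t| = t ^ β * g t` bounds the left-hand side by `s ^ (β - α)` times the integral operator on
`L^q(dt/t)` with kernel `K(u, t) = (t / u) ^ α * (t * u / (t + u) ^ 2) ^ r` applied to `g`. As
`t * u / (t + u) ^ 2 ≤ min (t / u) (u / t)`, the `dt/t`-mass of `K(u, ·)` over `t ≤ u` is at most
`1 / (r + α)`, and over `t > u` at most `1 / (r - α)`; the two add up to `2 * r / (r ^ 2 - α ^ 2)`.
Exchanging `t` and `u` replaces `α` by `-α`, which leaves this constant unchanged, so both marginals
of `K` obey the same bound and Schur's test applies.
-/

open MeasureTheory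
open scoped ENNReal NNReal

/-- The measure `dt/t` on the interval `(0,1] ⊆ ℝ`. -/
noncomputable def haarIoc : Measure ℝ :=
  (volume.restrict (Set.Ioc (0 : ℝ) 1)).withDensity fun t => ENNReal.ofReal t⁻¹

/-- The `L^q` norm on `(0,1]` with respect to the measure `dt/t`, for `q ∈ [1,∞]`:
the essential supremum if `q = ∞`, and `(∫₀¹ g(t)^q dt/t)^{1/q}` otherwise. -/
noncomputable def lqNorm (q : ℝ≥0∞) (g : ℝ → ℝ≥0∞) : ℝ≥0∞ :=
  if q = ⊤ then essSup g haarIoc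
  else (∫⁻ t, g t ^ q.toReal ∂haarIoc) ^ (1 / q.toReal)

section SchurTest

variable {X Y : Type*} [MeasurableSpace X] [MeasurableSpace Y] {μ : Measure X} {ν : Measure Y}

lemma lintegral_mul_rpow_le_rpow_mul_lintegral {w g : Y → ℝ≥0∞} (hw : AEMeasurable w ν)
    (hg : AEMeasurable g ν) {p : ℝ} (hp : 1 ≤ p) :
    (∫⁻ y, w y * g y ∂ν) ^ p ≤ (∫⁻ y, w y ∂ν) ^ (p - 1) * ∫⁻ y, w y * g y ^ p ∂ν := by
  have hp₀ : 0 < p := one_pos.trans_le hp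
  have hinv : 0 ≤ 1 - p⁻¹ := sub_nonneg.2 (inv_le_one_of_one_le₀ hp)
  have hsplit (y : Y) : w y * g y = w y ^ (1 - p⁻¹) * (w y * g y ^ p) ^ p⁻¹ := by
    rw [ENNReal.mul_rpow_of_nonneg _ _ (inv_nonneg.2 hp₀.le), ENNReal.rpow_rpow_inv hp₀.ne',
      ← mul_assoc, ← ENNReal.rpow_add_of_nonneg _ _ hinv (inv_nonneg.2 hp₀.le), sub_add_cancel,
      ENNReal.rpow_one]
  have hHolder : ∫⁻ y, w y * g y ∂ν ≤
      (∫⁻ y, w y ∂ν) ^ (1 - p⁻¹) * (∫⁻ y, w y * g y ^ p ∂ν) ^ p⁻¹ := by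
    simp_rw [hsplit]
    exact ENNReal.lintegral_mul_norm_pow_le hw (hw.mul (hg.pow_const p)) hinv
      (inv_nonneg.2 hp₀.le) (sub_add_cancel _ _)
  calc (∫⁻ y, w y * g y ∂ν) ^ p
      ≤ ((∫⁻ y, w y ∂ν) ^ (1 - p⁻¹) * (∫⁻ y, w y * g y ^ p ∂ν) ^ p⁻¹) ^ p := by gcongr
    _ = (∫⁻ y, w y ∂ν) ^ (p - 1) * ∫⁻ y, w y * g y ^ p ∂ν := by
      rw [ENNReal.mul_rpow_of_nonneg _ _ hp₀.le, ENNReal.rpow_inv_rpow hp₀.ne',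
        ← ENNReal.rpow_mul, sub_mul, one_mul, inv_mul_cancel₀ hp₀.ne']

variable {K : X → Y → ℝ≥0∞} {g : Y → ℝ≥0∞} {A B : ℝ≥0∞}

lemma lintegral_rpow_lintegral_mul_le [SFinite μ] [SFinite ν] {p : ℝ} (hp : 1 ≤ p)
    (hK : Measurable (Function.uncurry K)) (hg : AEMeasurable g ν)
    (hA : ∀ᵐ x ∂μ, ∫⁻ y, K x y ∂ν ≤ A) (hB : ∀ᵐ y ∂ν, ∫⁻ x, K x y ∂μ ≤ B) :
    ∫⁻ x, (∫⁻ y, K x y * g y ∂ν) ^ p ∂μ ≤ A ^ (p - 1) * B * ∫⁻ y, g y ^ p ∂ν := by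
  have hKg : AEMeasurable (Function.uncurry fun x y => K x y * g y ^ p) (μ.prod ν) :=
    hK.aemeasurable.mul (hg.comp_snd.pow_const p)
  calc ∫⁻ x, (∫⁻ y, K x y * g y ∂ν) ^ p ∂μ
      ≤ ∫⁻ x, A ^ (p - 1) * ∫⁻ y, K x y * g y ^ p ∂ν ∂μ := by
        refine lintegral_mono_ae (hA.mono fun x hx => ?_)
        refine (lintegral_mul_rpow_le_rpow_mul_lintegral hK.of_uncurry_left.aemeasurable hg
          hp).trans ?_
        gcongr
    _ = A ^ (p - 1) * ∫⁻ y, (∫⁻ x, K x y ∂μ) * g y ^ p ∂ν := by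
        rw [lintegral_const_mul'' _ hKg.lintegral_prod_right, lintegral_lintegral_swap hKg]
        simp_rw [lintegral_mul_const _ hK.of_uncurry_right]
    _ ≤ A ^ (p - 1) * ∫⁻ y, B * g y ^ p ∂ν := by
        gcongr 1
        exact lintegral_mono_ae (hB.mono fun y hy => by gcongr)
    _ = A ^ (p - 1) * B * ∫⁻ y, g y ^ p ∂ν := by
        rw [lintegral_const_mul'' _ (hg.pow_const p), mul_assoc]

lemma eLpNorm_top_lintegral_mul_le (hK : ∀ x, Measurable (K x))
    (hA : ∀ᵐ x ∂μ, ∫⁻ y, K x y ∂ν ≤ A) :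
    eLpNorm (fun x => ∫⁻ y, K x y * g y ∂ν) ∞ μ ≤ A * eLpNorm g ∞ ν := by
  rw [eLpNorm_exponent_top, eLpNorm_exponent_top]
  refine essSup_le_of_ae_le _ (hA.mono fun x hx => ?_)
  calc ∫⁻ y, K x y * g y ∂ν
      ≤ ∫⁻ y, K x y * eLpNormEssSup g ν ∂ν :=
        lintegral_mono_ae ((enorm_ae_le_eLpNormEssSup g ν).mono fun y hy => by
          rw [enorm_eq_self] at hy; gcongr)
    _ = (∫⁻ y, K x y ∂ν) * eLpNormEssSup g ν := lintegral_mul_const _ (hK x)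
    _ ≤ A * eLpNormEssSup g ν := by gcongr

/-- **Schur's test**. For `p = ∞` the exponents are `1` and `0`, because `∞.toReal⁻¹ = 0`. -/
lemma eLpNorm_lintegral_mul_le [SFinite μ] [SFinite ν] {p : ℝ≥0∞} (hp : 1 ≤ p)
    (hK : Measurable (Function.uncurry K)) (hg : AEMeasurable g ν)
    (hA : ∀ᵐ x ∂μ, ∫⁻ y, K x y ∂ν ≤ A) (hB : ∀ᵐ y ∂ν, ∫⁻ x, K x y ∂μ ≤ B) :
    eLpNorm (fun x => ∫⁻ y, K x y * g y ∂ν) p μ ≤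
      A ^ (1 - p.toReal⁻¹) * B ^ p.toReal⁻¹ * eLpNorm g p ν := by
  obtain rfl | hp_top := eq_or_ne p ∞
  · simpa using eLpNorm_top_lintegral_mul_le (fun _ => hK.of_uncurry_left) hA
  have hp_ne : p ≠ 0 := (one_pos.trans_le hp).ne'
  have hp_one : 1 ≤ p.toReal := by simpa using ENNReal.toReal_mono hp_top hp
  have hp_pos : 0 < p.toReal := one_pos.trans_le hp_one
  simp only [eLpNorm_eq_lintegral_rpow_enorm_toReal hp_ne hp_top, enorm_eq_self, one_div]
  calc (∫⁻ x, (∫⁻ y, K x y * g y ∂ν) ^ p.toReal ∂μ) ^ p.toReal⁻¹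
      ≤ (A ^ (p.toReal - 1) * B * ∫⁻ y, g y ^ p.toReal ∂ν) ^ p.toReal⁻¹ := by
        gcongr
        exact lintegral_rpow_lintegral_mul_le hp_one hK hg hA hB
    _ = A ^ (1 - p.toReal⁻¹) * B ^ p.toReal⁻¹ * (∫⁻ y, g y ^ p.toReal ∂ν) ^ p.toReal⁻¹ := by
        rw [ENNReal.mul_rpow_of_nonneg _ _ (inv_nonneg.2 hp_pos.le),
          ENNReal.mul_rpow_of_nonneg _ _ (inv_nonneg.2 hp_pos.le), ← ENNReal.rpow_mul, sub_mul,
          one_mul, mul_inv_cancel₀ hp_pos.ne']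

end SchurTest

section PowerIntegrals

variable {a u : ℝ}

lemma inv_mul_div_rpow (a : ℝ) {t : ℝ} (ht : 0 < t) (hu : 0 ≤ u) :
    t⁻¹ * (t / u) ^ a = t ^ (a - 1) * (u ^ a)⁻¹ := by
  rw [Real.div_rpow ht.le hu, Real.rpow_sub_one ht.ne']
  ring

lemma lintegral_Ioc_inv_mul_div_rpow (ha : 0 < a) (hu : 0 < u) :
    ∫⁻ t in Set.Ioc 0 u, ENNReal.ofReal (t⁻¹ * (t / u) ^ a) = ENNReal.ofReal (1 / a) := by
  have hpow : Set.EqOn (fun t => t⁻¹ * (t / u) ^ a) (fun t => t ^ (a - 1) * (u ^ a)⁻¹)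
      (Set.Ioc 0 u) := fun t ht => inv_mul_div_rpow a ht.1 hu.le
  have hint : IntegrableOn (fun t => t ^ (a - 1) * (u ^ a)⁻¹) (Set.Ioc 0 u) := by
    rw [← intervalIntegrable_iff_integrableOn_Ioc_of_le hu.le]
    exact (intervalIntegral.intervalIntegrable_rpow' (by linarith)).mul_const _
  rw [← ofReal_integral_eq_lintegral_ofReal (hint.congr_fun hpow.symm measurableSet_Ioc),
    setIntegral_congr_fun measurableSet_Ioc hpow, ← intervalIntegral.integral_of_le hu.le,
    intervalIntegral.integral_mul_const, integral_rpow (Or.inl (by linarith)), sub_add_cancel,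
    Real.zero_rpow ha.ne', sub_zero, div_mul_eq_mul_div,
    mul_inv_cancel₀ (Real.rpow_pos_of_pos hu a).ne']
  filter_upwards [ae_restrict_mem measurableSet_Ioc] with t ht
  exact mul_nonneg (inv_nonneg.2 ht.1.le) (Real.rpow_nonneg (div_nonneg ht.1.le hu.le) a)

lemma lintegral_Ioi_inv_mul_div_rpow (ha : a < 0) (hu : 0 < u) :
    ∫⁻ t in Set.Ioi u, ENNReal.ofReal (t⁻¹ * (t / u) ^ a) = ENNReal.ofReal (-1 / a) := by
  have hpow : Set.EqOn (fun t => t⁻¹ * (t / u) ^ a) (fun t => t ^ (a - 1) * (u ^ a)⁻¹)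
      (Set.Ioi u) := fun t ht => inv_mul_div_rpow a (hu.trans ht) hu.le
  have hint : IntegrableOn (fun t => t ^ (a - 1) * (u ^ a)⁻¹) (Set.Ioi u) :=
    (integrableOn_Ioi_rpow_of_lt (by linarith) hu).mul_const _
  rw [← ofReal_integral_eq_lintegral_ofReal (hint.congr_fun hpow.symm measurableSet_Ioi),
    setIntegral_congr_fun measurableSet_Ioi hpow, integral_mul_const,
    integral_Ioi_rpow_of_lt (by linarith) hu, sub_add_cancel, div_mul_eq_mul_div, neg_mul,
    mul_inv_cancel₀ (Real.rpow_pos_of_pos hu a).ne']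
  filter_upwards [ae_restrict_mem measurableSet_Ioi] with t ht
  have ht₀ : 0 < t := hu.trans ht
  exact mul_nonneg (inv_nonneg.2 ht₀.le) (Real.rpow_nonneg (div_nonneg ht₀.le hu.le) a)

end PowerIntegrals

/-- The kernel `(t / u) ^ α * (t * u / (t + u) ^ 2) ^ r` that the paraproduct kernel
`(t * u / (t + u) ^ 2) ^ r` becomes when it acts on functions carrying the weight `t ^ (-α)`. The
output variable `u` is the first of the two arguments. -/
noncomputable def weightedKernel (r α u t : ℝ) : ℝ :=
  (t / u) ^ α * (t * u / (t + u) ^ 2) ^ r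

namespace weightedKernel

variable {r α β s t u : ℝ}

lemma measurable_uncurry (r α : ℝ) : Measurable (Function.uncurry (weightedKernel r α)) := by
  unfold weightedKernel Function.uncurry
  fun_prop

lemma nonneg (ht : 0 ≤ t) (hu : 0 ≤ u) : 0 ≤ weightedKernel r α u t := by
  unfold weightedKernel
  positivity

lemma eq_swap (r α u t : ℝ) : weightedKernel r α u t = weightedKernel r (-α) t u := by
  unfold weightedKernel
  rw [Real.rpow_neg_eq_inv_rpow, inv_div, mul_comm u t, add_comm u t]

lemma le_div_rpow_add (hr : 0 ≤ r) (ht : 0 < t) (hu : 0 < u) :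
    weightedKernel r α u t ≤ (t / u) ^ (α + r) := by
  have hratio : t * u / (t + u) ^ 2 ≤ t / u := by
    rw [div_le_div_iff₀ (by positivity) hu, mul_assoc]
    gcongr
    nlinarith
  rw [Real.rpow_add (div_pos ht hu)]
  unfold weightedKernel
  gcongr

lemma le_div_rpow_sub (hr : 0 ≤ r) (ht : 0 < t) (hu : 0 < u) :
    weightedKernel r α u t ≤ (t / u) ^ (α - r) :=
  calc weightedKernel r α u t = weightedKernel r (-α) t u := eq_swap r α u t
    _ ≤ (u / t) ^ (-α + r) := le_div_rpow_add hr hu ht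
    _ = (t / u) ^ (α - r) := by
      rw [← inv_div, ← Real.rpow_neg_eq_inv_rpow, neg_add, neg_neg, sub_eq_add_neg]

lemma lintegral_Ioi_inv_mul_le (hα : |α| < r) (hu : 0 < u) :
    ∫⁻ t in Set.Ioi 0, ENNReal.ofReal (t⁻¹ * weightedKernel r α u t) ≤
      ENNReal.ofReal (2 * r / (r ^ 2 - α ^ 2)) := by
  have hr : 0 ≤ r := (abs_nonneg α).trans hα.le
  obtain ⟨hα₁, hα₂⟩ := abs_lt.1 hα
  have hadd : 0 < α + r := by linarith
  have hsub : α - r < 0 := by linarith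
  have hbelow : ∫⁻ t in Set.Ioc 0 u, ENNReal.ofReal (t⁻¹ * weightedKernel r α u t) ≤
      ENNReal.ofReal (1 / (α + r)) := by
    rw [← lintegral_Ioc_inv_mul_div_rpow hadd hu]
    refine setLIntegral_mono' measurableSet_Ioc fun t ht => ?_
    have ht₀ : 0 < t := ht.1
    gcongr
    exact le_div_rpow_add hr ht₀ hu
  have habove : ∫⁻ t in Set.Ioi u, ENNReal.ofReal (t⁻¹ * weightedKernel r α u t) ≤
      ENNReal.ofReal (-1 / (α - r)) := by
    rw [← lintegral_Ioi_inv_mul_div_rpow hsub hu]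
    refine setLIntegral_mono' measurableSet_Ioi fun t ht => ?_
    have ht₀ : 0 < t := hu.trans ht
    gcongr
    exact le_div_rpow_sub hr ht₀ hu
  calc ∫⁻ t in Set.Ioi 0, ENNReal.ofReal (t⁻¹ * weightedKernel r α u t)
      ≤ ENNReal.ofReal (1 / (α + r)) + ENNReal.ofReal (-1 / (α - r)) := by
        rw [← Set.Ioc_union_Ioi_eq_Ioi hu.le]
        exact (lintegral_union_le _ _ _).trans (add_le_add hbelow habove)
    _ = ENNReal.ofReal (2 * r / (r ^ 2 - α ^ 2)) := by
        rw [← ENNReal.ofReal_add (one_div_nonneg.2 hadd.le)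
          (div_nonneg_of_nonpos (by norm_num) hsub.le),
          show r ^ 2 - α ^ 2 = -((α + r) * (α - r)) by ring]
        congr 1
        have := hadd.ne'
        have := hsub.ne
        field_simp
        ring

lemma rpow_neg_mul_le (hβ : α ≤ β) (ht : 0 < t) (hts : t ≤ s) (hu : 0 < u) :
    u ^ (-α) * (t * u / (t + u) ^ 2) ^ r ≤
      s ^ (β - α) * (weightedKernel r α u t * t ^ (-β)) := by
  have hs : 0 < s := ht.trans_le hts
  have hone : 1 ≤ (s / t) ^ (β - α) :=
    Real.one_le_rpow ((one_le_div ht).2 hts) (sub_nonneg.2 hβ)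
  calc u ^ (-α) * (t * u / (t + u) ^ 2) ^ r
      ≤ u ^ (-α) * (t * u / (t + u) ^ 2) ^ r * (s / t) ^ (β - α) :=
        le_mul_of_one_le_right (by positivity) hone
    _ = s ^ (β - α) * (weightedKernel r α u t * t ^ (-β)) := by
        rw [weightedKernel, Real.div_rpow hs.le ht.le, Real.div_rpow ht.le hu.le,
          Real.rpow_sub ht, Real.rpow_neg hu.le, Real.rpow_neg ht.le]
        have := Real.rpow_pos_of_pos ht α
        field_simp

end weightedKernel

section haarIoc

instance : SFinite haarIoc := by
  unfold haarIoc
  infer_instance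

lemma lintegral_haarIoc (h : ℝ → ℝ≥0∞) :
    ∫⁻ t, h t ∂haarIoc = ∫⁻ t in Set.Ioc 0 1, ENNReal.ofReal t⁻¹ * h t :=
  lintegral_withDensity_eq_lintegral_mul_non_measurable _ (by fun_prop)
    (Filter.Eventually.of_forall fun _ => ENNReal.ofReal_lt_top) h

lemma ae_haarIoc_mem_Ioc : ∀ᵐ t ∂haarIoc, t ∈ Set.Ioc (0 : ℝ) 1 :=
  (withDensity_absolutelyContinuous _ _).ae_le (ae_restrict_mem measurableSet_Ioc)

lemma lqNorm_eq_eLpNorm {q : ℝ≥0∞} (hq : q ≠ 0) (g : ℝ → ℝ≥0∞) :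
    lqNorm q g = eLpNorm g q haarIoc := by
  simp only [lqNorm, eLpNorm, hq, if_false, eLpNormEssSup, eLpNorm', enorm_eq_self]

variable {r α β s u : ℝ}

lemma lintegral_haarIoc_weightedKernel_le (hα : |α| < r) (hu : 0 < u) :
    ∫⁻ t, ENNReal.ofReal (weightedKernel r α u t) ∂haarIoc ≤
      ENNReal.ofReal (2 * r / (r ^ 2 - α ^ 2)) := by
  rw [lintegral_haarIoc]
  calc ∫⁻ t in Set.Ioc 0 1, ENNReal.ofReal t⁻¹ * ENNReal.ofReal (weightedKernel r α u t)
      = ∫⁻ t in Set.Ioc 0 1, ENNReal.ofReal (t⁻¹ * weightedKernel r α u t) :=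
        setLIntegral_congr_fun measurableSet_Ioc fun t ht =>
          (ENNReal.ofReal_mul (inv_nonneg.2 ht.1.le)).symm
    _ ≤ ∫⁻ t in Set.Ioi 0, ENNReal.ofReal (t⁻¹ * weightedKernel r α u t) :=
        lintegral_mono_set Set.Ioc_subset_Ioi_self
    _ ≤ ENNReal.ofReal (2 * r / (r ^ 2 - α ^ 2)) :=
        weightedKernel.lintegral_Ioi_inv_mul_le hα hu

lemma eLpNorm_lintegral_weightedKernel_mul_le (hα : |α| < r) {q : ℝ≥0∞} (hq : 1 ≤ q)
    {g : ℝ → ℝ≥0∞} (hg : AEMeasurable g haarIoc) :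
    eLpNorm (fun u => ∫⁻ t, ENNReal.ofReal (weightedKernel r α u t) * g t ∂haarIoc) q haarIoc ≤
      ENNReal.ofReal (2 * r / (r ^ 2 - α ^ 2)) * eLpNorm g q haarIoc := by
  have hleft : ∀ᵐ u ∂haarIoc, ∫⁻ t, ENNReal.ofReal (weightedKernel r α u t) ∂haarIoc ≤
      ENNReal.ofReal (2 * r / (r ^ 2 - α ^ 2)) :=
    ae_haarIoc_mem_Ioc.mono fun u hu => lintegral_haarIoc_weightedKernel_le hα hu.1
  have hright : ∀ᵐ t ∂haarIoc, ∫⁻ u, ENNReal.ofReal (weightedKernel r α u t) ∂haarIoc ≤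
      ENNReal.ofReal (2 * r / (r ^ 2 - α ^ 2)) := by
    filter_upwards [ae_haarIoc_mem_Ioc] with t ht
    simp_rw [weightedKernel.eq_swap r α _ t, ← neg_sq α]
    exact lintegral_haarIoc_weightedKernel_le (by rwa [abs_neg]) ht.1
  have hinv : q.toReal⁻¹ ≤ 1 := by
    obtain rfl | hq_top := eq_or_ne q ∞
    · simp
    · exact inv_le_one_of_one_le₀ (by simpa using ENNReal.toReal_mono hq_top hq)
  have hSchur := eLpNorm_lintegral_mul_le hq (weightedKernel.measurable_uncurry r α).ennreal_ofReal
    hg hleft hright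
  rwa [← ENNReal.rpow_add_of_nonneg _ _ (sub_nonneg.2 hinv) (inv_nonneg.2 ENNReal.toReal_nonneg),
    sub_add_cancel, ENNReal.rpow_one] at hSchur

lemma rpow_neg_mul_setLIntegral_le (hβ : α ≤ β) (hs : s ≤ 1) (hu : 0 < u) {φ : ℝ → ℝ}
    (hφ : ∀ t, 0 ≤ φ t) :
    ENNReal.ofReal (u ^ (-α)) * ∫⁻ t in Set.Ioc 0 s,
        ENNReal.ofReal ((t * u / (t + u) ^ 2) ^ r * φ t) * ENNReal.ofReal t⁻¹ ≤
      ENNReal.ofReal (s ^ (β - α)) * ∫⁻ t, ENNReal.ofReal (weightedKernel r α u t) *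
        ENNReal.ofReal (t ^ (-β) * φ t) ∂haarIoc := by
  rw [lintegral_haarIoc, ← lintegral_const_mul' _ _ ENNReal.ofReal_ne_top,
    ← lintegral_const_mul' _ _ ENNReal.ofReal_ne_top]
  refine (setLIntegral_mono' measurableSet_Ioc fun t ht => ?_).trans
    (lintegral_mono_set (Set.Ioc_subset_Ioc_right hs))
  have ht₀ : 0 < t := ht.1
  have hs₀ : 0 < s := ht₀.trans_le ht.2
  have hφt : 0 ≤ φ t := hφ t
  have hK : 0 ≤ weightedKernel r α u t := weightedKernel.nonneg ht₀.le hu.le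
  rw [← ENNReal.ofReal_mul (by positivity), ← ENNReal.ofReal_mul (by positivity),
    ← ENNReal.ofReal_mul hK, ← ENNReal.ofReal_mul (by positivity),
    ← ENNReal.ofReal_mul (by positivity)]
  refine ENNReal.ofReal_le_ofReal ?_
  calc u ^ (-α) * ((t * u / (t + u) ^ 2) ^ r * φ t * t⁻¹)
      = u ^ (-α) * (t * u / (t + u) ^ 2) ^ r * (φ t * t⁻¹) := by ring
    _ ≤ s ^ (β - α) * (weightedKernel r α u t * t ^ (-β)) * (φ t * t⁻¹) := by
        exact mul_le_mul_of_nonneg_right (weightedKernel.rpow_neg_mul_le hβ ht₀ ht.2 hu)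
          (by positivity)
    _ = s ^ (β - α) * (t⁻¹ * (weightedKernel r α u t * (t ^ (-β) * φ t))) := by ring

end haarIoc

theorem stmt2_general {E : Type*} [SeminormedAddCommGroup E] {r α β s : ℝ} (hα : |α| < r)
    (hβ : α ≤ β) (hs : s ∈ Set.Ioc (0 : ℝ) 1) {q : ℝ≥0∞} (hq : 1 ≤ q) {f : ℝ → E}
    (hf : AEStronglyMeasurable f haarIoc) :
    lqNorm q (fun u => ENNReal.ofReal (u ^ (-α)) *
        ∫⁻ t in Set.Ioc (0 : ℝ) s,
          ENNReal.ofReal ((t * u / (t + u) ^ 2) ^ r * ‖f t‖) * ENNReal.ofReal t⁻¹) ≤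
      ENNReal.ofReal (2 * r / (r ^ 2 - α ^ 2) * s ^ (β - α)) *
        lqNorm q (fun u => ENNReal.ofReal (u ^ (-β) * ‖f u‖)) := by
  have hq₀ : q ≠ 0 := (one_pos.trans_le hq).ne'
  have hg : AEMeasurable (fun t => ENNReal.ofReal (t ^ (-β) * ‖f t‖)) haarIoc :=
    (AEMeasurable.mul (by fun_prop) hf.norm.aemeasurable).ennreal_ofReal
  simp only [lqNorm_eq_eLpNorm hq₀]
  rw [mul_comm (2 * r / _), ENNReal.ofReal_mul (Real.rpow_nonneg hs.1.le _), mul_assoc]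
  refine (eLpNorm_le_mul_eLpNorm_of_ae_le_mul' ?_ q).trans
    (mul_le_mul_right (eLpNorm_lintegral_weightedKernel_mul_le hα hq hg) _)
  filter_upwards [ae_haarIoc_mem_Ioc] with u hu
  rw [enorm_eq_self, enorm_eq_self]
  exact rpow_neg_mul_setLIntegral_le hβ hs.2 hu.1 fun t => norm_nonneg (f t)

/-- Let `r > 0`, `α ∈ (−r, r)`, `β ∈ (α, r)`, `q ∈ [1,∞]`, `s ∈ (0,1]` and
`f : (0,1] → ℝ` measurable. Then
`‖ u ↦ u^{−α} ∫₀^s (tu/(t+u)²)^r |f(t)| dt/t ‖_{L^q((0,1], du/u)}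
  ≤ (2r/(r² − α²)) · s^{β−α} · ‖ u ↦ u^{−β} f(u) ‖_{L^q((0,1], du/u)}`. -/
theorem stmt2 (r α β : ℝ) (hr : 0 < r) (hα₁ : -r < α) (hα₂ : α < r)
    (hβ₁ : α < β) (hβ₂ : β < r)
    (q : ℝ≥0∞) (hq : 1 ≤ q) (s : ℝ) (hs : s ∈ Set.Ioc (0 : ℝ) 1)
    (f : ℝ → ℝ) (hf : Measurable f) :
    lqNorm q (fun u => ENNReal.ofReal (u ^ (-α)) *
        ∫⁻ t in Set.Ioc (0 : ℝ) s,
          ENNReal.ofReal ((t * u / (t + u) ^ 2) ^ r * |f t|) * ENNReal.ofReal t⁻¹) ≤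
      ENNReal.ofReal (2 * r / (r ^ 2 - α ^ 2) * s ^ (β - α)) *
        lqNorm q (fun u => ENNReal.ofReal (u ^ (-β) * |f u|)) := by
  simpa only [Real.norm_eq_abs] using
    stmt2_general (abs_lt.2 ⟨hα₁, hα₂⟩) hβ₁.le hs hq hf.aestronglyMeasurable
end

section
/- Let F : (0,1] → [0,∞) be measurable and let C ≥ 0 be such that F(t) ≤ C · ∫_{t/2}^t F(s) ds/s for every t ∈ (0,1]. Then for every α ∈ ℝ and all exponents 1 ≤ q₁ ≤ q₂ ≤ ∞ there exists a constant C' depending only on C, α and q₁ such that ‖ t ↦ t^{−α/2} F(t) ‖_{L^{q₂}((0,1], dt/t)} ≤ C' · ‖ t ↦ t^{−α/2} F(t) ‖_{L^{q₁}((0,1], dt/t)}. -/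
/-!
On the dyadic window `(t/2, t]` the weights `s^{-α/2}` and `t^{-α/2}` agree up to the factor
`2^{|α|/2}`, so the local-averaging inequality passes from `F` to `G(t) = t^{-α/2} F(t)`. The window
has `dt/t`-measure at most one, so by Hölder the average of `G` over it is at most `‖G‖_{q₁}`; hence
`‖G‖_∞ ≤ C 2^{|α|/2} ‖G‖_{q₁}`. Interpolating, `‖G‖_{q₂} ≤ max (‖G‖_{q₁}) (‖G‖_∞)`.
-/

open MeasureTheory
open scoped ENNReal NNReal

section LocalAveraging

variable {X : Type*} [MeasurableSpace X] {μ : Measure X}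

lemma lintegral_rpow_le_rpow_sub_mul_lintegral_rpow {g : X → ℝ≥0∞} {B : ℝ≥0∞} (hB : B ≠ ⊤)
    (hgB : ∀ᵐ x ∂μ, g x ≤ B) {p q : ℝ} (hp : 0 ≤ p) (hpq : p ≤ q) :
    ∫⁻ x, g x ^ q ∂μ ≤ B ^ (q - p) * ∫⁻ x, g x ^ p ∂μ := by
  have hqp : 0 ≤ q - p := sub_nonneg.2 hpq
  calc ∫⁻ x, g x ^ q ∂μ
      = ∫⁻ x, g x ^ (q - p) * g x ^ p ∂μ := by
        simp only [← ENNReal.rpow_add_of_nonneg _ _ hqp hp, sub_add_cancel]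
    _ ≤ ∫⁻ x, B ^ (q - p) * g x ^ p ∂μ :=
        lintegral_mono_ae (hgB.mono fun x hx => by gcongr)
    _ = B ^ (q - p) * ∫⁻ x, g x ^ p ∂μ :=
        lintegral_const_mul' _ _ (ENNReal.rpow_ne_top_of_nonneg hqp hB)

lemma eLpNorm_le_max_eLpNorm_eLpNorm_top {E : Type*} [ENorm E] {f : X → E} {p q : ℝ≥0∞}
    (hp : p ≠ 0) (hpq : p ≤ q) : eLpNorm f q μ ≤ max (eLpNorm f p μ) (eLpNorm f ⊤ μ) := by
  obtain rfl | hq_top := eq_or_ne q ⊤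
  · exact le_max_right _ _
  have hp_top : p ≠ ⊤ := ne_top_of_le_ne_top hq_top hpq
  have hq : q ≠ 0 := (hp.bot_lt.trans_le hpq).ne'
  have hp_pos : 0 < p.toReal := ENNReal.toReal_pos hp hp_top
  have hpq_real : p.toReal ≤ q.toReal := ENNReal.toReal_mono hq_top hpq
  set B := max (eLpNorm f p μ) (eLpNorm f ⊤ μ)
  obtain hB_top | hB_top := eq_or_ne B ⊤
  · exact hB_top ▸ le_top
  have hf_le : ∀ᵐ x ∂μ, ‖f x‖ₑ ≤ B :=
    ae_le_eLpNormEssSup.mono fun x hx =>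
      hx.trans (eLpNorm_exponent_top.symm.trans_le (le_max_right _ _))
  have hfp : ∫⁻ x, ‖f x‖ₑ ^ p.toReal ∂μ ≤ B ^ p.toReal := by
    rw [← ENNReal.rpow_inv_le_iff hp_pos, ← one_div,
      ← eLpNorm_eq_lintegral_rpow_enorm_toReal hp hp_top]
    exact le_max_left _ _
  rw [eLpNorm_eq_lintegral_rpow_enorm_toReal hq hq_top, one_div,
    ENNReal.rpow_inv_le_iff (hp_pos.trans_le hpq_real)]
  calc ∫⁻ x, ‖f x‖ₑ ^ q.toReal ∂μ
      ≤ B ^ (q.toReal - p.toReal) * ∫⁻ x, ‖f x‖ₑ ^ p.toReal ∂μ :=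
        lintegral_rpow_le_rpow_sub_mul_lintegral_rpow hB_top hf_le hp_pos.le hpq_real
    _ ≤ B ^ (q.toReal - p.toReal) * B ^ p.toReal := by gcongr
    _ = B ^ q.toReal := by
        rw [← ENNReal.rpow_add_of_nonneg _ _ (sub_nonneg.2 hpq_real) hp_pos.le, sub_add_cancel]

variable {E : Type*} [TopologicalSpace E] [ContinuousENorm E] {f : X → E} {p q : ℝ≥0∞}

lemma setLIntegral_enorm_le_eLpNorm (hp : 1 ≤ p) (hf : AEStronglyMeasurable f μ) {s : Set X}
    (hs : μ s ≤ 1) : ∫⁻ x in s, ‖f x‖ₑ ∂μ ≤ eLpNorm f p μ := by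
  have h_exponent : 0 ≤ 1 / (1 : ℝ≥0∞).toReal - 1 / p.toReal := by
    obtain rfl | hp_top := eq_or_ne p ⊤
    · simp
    · have : 1 ≤ p.toReal := by simpa using ENNReal.toReal_mono hp_top hp
      simpa using inv_le_one_of_one_le₀ this
  calc ∫⁻ x in s, ‖f x‖ₑ ∂μ
      = eLpNorm f 1 (μ.restrict s) := eLpNorm_one_eq_lintegral_enorm.symm
    _ ≤ eLpNorm f p (μ.restrict s) * μ s ^ (1 / (1 : ℝ≥0∞).toReal - 1 / p.toReal) := by
        simpa only [Measure.restrict_apply_univ] using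
          eLpNorm_le_eLpNorm_mul_rpow_measure_univ hp hf.restrict
    _ ≤ eLpNorm f p μ * 1 :=
        mul_le_mul' (eLpNorm_restrict_le f p μ s) (ENNReal.rpow_le_one hs h_exponent)
    _ = eLpNorm f p μ := mul_one _

lemma eLpNorm_le_max_one_mul_of_ae_le_setLIntegral (hp : 1 ≤ p) (hpq : p ≤ q)
    (hf : AEStronglyMeasurable f μ) {s : X → Set X} (hs : ∀ᵐ x ∂μ, μ (s x) ≤ 1) {K : ℝ≥0∞}
    (hfs : ∀ᵐ x ∂μ, ‖f x‖ₑ ≤ K * ∫⁻ y in s x, ‖f y‖ₑ ∂μ) :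
    eLpNorm f q μ ≤ max 1 K * eLpNorm f p μ := by
  have h_top : eLpNorm f ⊤ μ ≤ K * eLpNorm f p μ := by
    rw [eLpNorm_exponent_top]
    refine eLpNormEssSup_le_of_ae_enorm_bound ?_
    filter_upwards [hs, hfs] with x hsx hfx
    exact hfx.trans (by gcongr; exact setLIntegral_enorm_le_eLpNorm hp hf hsx)
  calc eLpNorm f q μ
      ≤ max (eLpNorm f p μ) (eLpNorm f ⊤ μ) :=
        eLpNorm_le_max_eLpNorm_eLpNorm_top (zero_lt_one.trans_le hp).ne' hpq
    _ ≤ max (1 * eLpNorm f p μ) (K * eLpNorm f p μ) := by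
        rw [one_mul]
        gcongr
    _ = max 1 K * eLpNorm f p μ := max_mul_mul_right _ _ _

lemma mul_setLIntegral_le_mul_setLIntegral_mul {s : Set X} (hs : MeasurableSet s)
    {w g : X → ℝ≥0∞} (hwg : AEMeasurable (fun x => w x * g x) (μ.restrict s)) {a K : ℝ≥0∞}
    (haw : ∀ x ∈ s, a ≤ K * w x) :
    a * ∫⁻ x in s, g x ∂μ ≤ K * ∫⁻ x in s, w x * g x ∂μ :=
  calc a * ∫⁻ x in s, g x ∂μ
      ≤ ∫⁻ x in s, a * g x ∂μ := lintegral_const_mul_le _ _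
    _ ≤ ∫⁻ x in s, K * (w x * g x) ∂μ := by
        refine setLIntegral_mono' hs fun x hx => ?_
        rw [← mul_assoc]
        gcongr
        exact haw x hx
    _ = K * ∫⁻ x in s, w x * g x ∂μ := lintegral_const_mul'' _ hwg

end LocalAveraging

lemma setLIntegral_haarIoc {s : Set ℝ} (hs : MeasurableSet s) (hs01 : s ⊆ Set.Ioc 0 1)
    (g : ℝ → ℝ≥0∞) :
    ∫⁻ t in s, g t ∂haarIoc = ∫⁻ t in s, g t * ENNReal.ofReal t⁻¹ := by
  rw [haarIoc, setLIntegral_withDensity_eq_setLIntegral_mul_non_measurable _ (by fun_prop) _ hs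
    (ae_of_all _ fun _ => ENNReal.ofReal_lt_top), Measure.restrict_restrict_of_subset hs01]
  simp only [Pi.mul_apply, mul_comm]

lemma Ioc_half_subset_Ioc_zero_one {t : ℝ} (ht : t ∈ Set.Ioc (0 : ℝ) 1) :
    Set.Ioc (t / 2) t ⊆ Set.Ioc 0 1 :=
  Set.Ioc_subset_Ioc (half_pos ht.1).le ht.2

lemma haarIoc_Ioc_half_le_one {t : ℝ} (ht : t ∈ Set.Ioc (0 : ℝ) 1) :
    haarIoc (Set.Ioc (t / 2) t) ≤ 1 := by
  have ht_half : 0 < t / 2 := half_pos ht.1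
  calc haarIoc (Set.Ioc (t / 2) t)
      = ∫⁻ s in Set.Ioc (t / 2) t, ENNReal.ofReal s⁻¹ := by
        rw [← setLIntegral_one,
          setLIntegral_haarIoc measurableSet_Ioc (Ioc_half_subset_Ioc_zero_one ht)]
        simp only [one_mul]
    _ ≤ ∫⁻ _ in Set.Ioc (t / 2) t, ENNReal.ofReal (t / 2)⁻¹ :=
        setLIntegral_mono measurable_const fun s hs =>
          ENNReal.ofReal_le_ofReal (inv_anti₀ ht_half hs.1.le)
    _ = 1 := by
        rw [setLIntegral_const, Real.volume_Ioc, sub_half, ENNReal.ofReal_inv_of_pos ht_half]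
        exact ENNReal.inv_mul_cancel (ENNReal.ofReal_pos.2 ht_half).ne' ENNReal.ofReal_ne_top

lemma lqNorm_congr_ae {g h : ℝ → ℝ≥0∞} (hgh : g =ᵐ[haarIoc] h) (q : ℝ≥0∞) :
    lqNorm q g = lqNorm q h := by
  have h_rpow : ∫⁻ t, g t ^ q.toReal ∂haarIoc = ∫⁻ t, h t ^ q.toReal ∂haarIoc :=
    lintegral_congr_ae (hgh.fun_comp (· ^ q.toReal))
  rw [lqNorm, lqNorm, essSup_congr_ae hgh, h_rpow]

lemma lqNorm_ofReal_rpow_mul (q : ℝ≥0∞) (β : ℝ) (F : ℝ → ℝ) :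
    lqNorm q (fun t => ENNReal.ofReal (t ^ β * F t)) =
      lqNorm q (fun t => ENNReal.ofReal (t ^ β) * ENNReal.ofReal (F t)) :=
  lqNorm_congr_ae (ae_haarIoc_mem_Ioc.mono fun _ ht =>
    ENNReal.ofReal_mul (Real.rpow_nonneg ht.1.le β)) q

lemma rpow_le_rpow_abs_mul_rpow {c s t : ℝ} (hs : 0 < s) (hst : s ≤ t) (htc : t ≤ c * s) (β : ℝ) :
    t ^ β ≤ c ^ |β| * s ^ β := by
  have h_one_le : 1 ≤ t / s := (one_le_div hs).2 hst
  have h_ratio : (t / s) ^ β ≤ c ^ |β| :=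
    calc (t / s) ^ β
        ≤ (t / s) ^ |β| := Real.rpow_le_rpow_of_exponent_le h_one_le (le_abs_self β)
      _ ≤ c ^ |β| := Real.rpow_le_rpow (by positivity) ((div_le_iff₀ hs).2 htc) (abs_nonneg β)
  rwa [Real.div_rpow (hs.le.trans hst) hs.le, div_le_iff₀ (Real.rpow_pos_of_pos hs β)] at h_ratio

lemma ofReal_rpow_le_mul_of_mem_Ioc_half {s t : ℝ} (ht : 0 < t) (hs : s ∈ Set.Ioc (t / 2) t)
    (β : ℝ) : ENNReal.ofReal (t ^ β) ≤ ENNReal.ofReal (2 ^ |β|) * ENNReal.ofReal (s ^ β) := by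
  rw [← ENNReal.ofReal_mul (by positivity)]
  exact ENNReal.ofReal_le_ofReal <|
    rpow_le_rpow_abs_mul_rpow ((half_pos ht).trans hs.1) hs.2 (by linarith [hs.1]) β

theorem stmt8_general {C K q₁ q₂ : ℝ≥0∞} (hq₁ : 1 ≤ q₁) (hq : q₁ ≤ q₂) {w F : ℝ → ℝ≥0∞}
    (hwF : AEMeasurable (fun t => w t * F t) haarIoc)
    (hw : ∀ t ∈ Set.Ioc (0 : ℝ) 1, ∀ s ∈ Set.Ioc (t / 2) t, w t ≤ K * w s)
    (hF : ∀ t ∈ Set.Ioc (0 : ℝ) 1,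
      F t ≤ C * ∫⁻ s in Set.Ioc (t / 2) t, F s * ENNReal.ofReal s⁻¹) :
    lqNorm q₂ (fun t => w t * F t) ≤ max 1 (C * K) * lqNorm q₁ (fun t => w t * F t) := by
  have hq₁_pos : 0 < q₁ := zero_lt_one.trans_le hq₁
  rw [lqNorm_eq_eLpNorm hq₁_pos.ne', lqNorm_eq_eLpNorm (hq₁_pos.trans_le hq).ne']
  refine eLpNorm_le_max_one_mul_of_ae_le_setLIntegral hq₁ hq hwF.aestronglyMeasurable
    (ae_haarIoc_mem_Ioc.mono fun t ht => haarIoc_Ioc_half_le_one ht)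
    (ae_haarIoc_mem_Ioc.mono fun t ht => ?_)
  simp only [enorm_eq_self]
  calc w t * F t
      ≤ w t * (C * ∫⁻ s in Set.Ioc (t / 2) t, F s ∂haarIoc) := by
        rw [setLIntegral_haarIoc measurableSet_Ioc (Ioc_half_subset_Ioc_zero_one ht)]
        gcongr
        exact hF t ht
    _ = C * (w t * ∫⁻ s in Set.Ioc (t / 2) t, F s ∂haarIoc) := mul_left_comm _ _ _
    _ ≤ C * (K * ∫⁻ s in Set.Ioc (t / 2) t, w s * F s ∂haarIoc) := by
        gcongr C * ?_
        exact mul_setLIntegral_le_mul_setLIntegral_mul measurableSet_Ioc hwF.restrict (hw t ht)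
    _ = C * K * ∫⁻ s in Set.Ioc (t / 2) t, w s * F s ∂haarIoc := (mul_assoc _ _ _).symm

/-- If a measurable `F : (0,1] → [0,∞)` satisfies `F(t) ≤ C ∫_{t/2}^t F(s) ds/s` for
all `t ∈ (0,1]`, then for every `α ∈ ℝ` and `1 ≤ q₁ ≤ q₂ ≤ ∞` one has
`‖ t ↦ t^{−α/2} F(t) ‖_{L^{q₂}((0,1], dt/t)} ≤ C' · ‖ t ↦ t^{−α/2} F(t) ‖_{L^{q₁}((0,1], dt/t)}`
with a constant `C'` depending only on `C`, `α` and `q₁`. -/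
theorem stmt8 (C : ℝ) (hC : 0 ≤ C) (α : ℝ) (q₁ : ℝ≥0∞) (hq₁ : 1 ≤ q₁) :
    ∃ C' : ℝ, 0 ≤ C' ∧
      ∀ q₂ : ℝ≥0∞, q₁ ≤ q₂ →
      ∀ F : ℝ → ℝ, Measurable F → (∀ t ∈ Set.Ioc (0 : ℝ) 1, 0 ≤ F t) →
        (∀ t ∈ Set.Ioc (0 : ℝ) 1,
          ENNReal.ofReal (F t) ≤ ENNReal.ofReal C *
            ∫⁻ s in Set.Ioc (t / 2) t, ENNReal.ofReal (F s) * ENNReal.ofReal s⁻¹) →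
        lqNorm q₂ (fun t => ENNReal.ofReal (t ^ (-α / 2) * F t)) ≤
          ENNReal.ofReal C' * lqNorm q₁ (fun t => ENNReal.ofReal (t ^ (-α / 2) * F t)) := by
  refine ⟨max 1 (C * 2 ^ |-α / 2|), by positivity, fun q₂ hq F hF _ hF_avg => ?_⟩
  rw [lqNorm_ofReal_rpow_mul, lqNorm_ofReal_rpow_mul, ENNReal.ofReal_max, ENNReal.ofReal_one,
    ENNReal.ofReal_mul hC]
  exact stmt8_general hq₁ hq (by fun_prop)
    (fun t ht s hs => ofReal_rpow_le_mul_of_mem_Ioc_half ht.1 hs _) hF_avg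
end
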